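/- arXiv:2501.18396 — 6 statements merged into one kernel-verified Lean document; each statement's English description precedes it below -/
import Mathlib

section
/- Let p be a prime, 𝔽 a finite field of characteristic p, and G₁, G₂ arbitrary groups. Let V be a 2-dimensional 𝔽-vector space with an 𝔽-linear action of G₁ × G₂, and let W ⊆ V be a 1-dimensional (G₁ × G₂)-stable subspace such that G₁ × G₂ acts on W through a character η′ : G₁ × G₂ → 𝔽ˣ and on the quotient V/W through a character η : G₁ × G₂ → 𝔽ˣ. If there is no G₁-stable line W′ ⊆ V with V = W ⊕ W′ (i.e. the extension 0 → W → V → V/W → 0 does not split as a sequence of representations of G₁, acting via g ↦ (g,1)), then η(1,g) = η′(1,g) for every g ∈ G₂. In particular, if η ≠ η′, then the extension splits as a representation of G₁ or as a representation of G₂ (G₂ acting via g ↦ (1,g)). -/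
theorem split_of_ne {𝔽 G V : Type*} [Field 𝔽] [Group G] [AddCommGroup V] [Module 𝔽 V]
    (hV : Module.finrank 𝔽 V = 2) (ρ : Representation 𝔽 G V)
    (W : Submodule 𝔽 V) (hW : Module.finrank 𝔽 ↥W = 1) (x : G) (a b : 𝔽) (hab : a ≠ b)
    (hb : ∀ w ∈ W, ρ x w = b • w) (ha : ∀ v : V, ρ x v - a • v ∈ W) :
    ∃ W' : Submodule 𝔽 V, Module.finrank 𝔽 ↥W' = 1 ∧ IsCompl W W' ∧
      ∀ y : G, x * y = y * x → ∀ w ∈ W', ρ y w ∈ W' := by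
  have hab' : a - b ≠ 0 := sub_ne_zero.mpr hab
  have hfin : FiniteDimensional 𝔽 V := Module.finite_of_finrank_pos (by omega)
  have hmem : ∀ w : V, w ∈ LinearMap.ker (ρ x - a • LinearMap.id) ↔ ρ x w = a • w := by
    intro w
    simp [sub_eq_zero]
  have hc : IsCompl W (LinearMap.ker (ρ x - a • LinearMap.id)) := by
    constructor
    · rw [Submodule.disjoint_def]
      intro w hw hw'
      rw [hmem, hb w hw] at hw'
      have h : (a - b) • w = 0 := by rw [sub_smul, hw', sub_self]
      exact (smul_eq_zero.mp h).resolve_left hab'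
    · rw [codisjoint_iff, eq_top_iff]
      intro v _
      have hu := ha v
      have hv' : ρ x v - b • v ∈ LinearMap.ker (ρ x - a • LinearMap.id) := by
        rw [hmem]
        have h := hb _ hu
        rw [map_sub, map_smul, sub_eq_iff_eq_add] at h
        rw [map_sub, map_smul, h]
        module
      have h : v = -((a - b)⁻¹ • (ρ x v - a • v)) + (a - b)⁻¹ • (ρ x v - b • v) := by
        have h2 : v = ((a - b)⁻¹ * (a - b)) • v := by rw [inv_mul_cancel₀ hab', one_smul]
        nth_rewrite 1 [h2]
        module
      rw [h]
      exact Submodule.add_mem_sup (W.neg_mem (W.smul_mem _ hu)) (Submodule.smul_mem _ _ hv')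
  refine ⟨_, ?_, hc, ?_⟩
  · have := Submodule.finrank_add_eq_of_isCompl hc
    omega
  · intro y hy w hw
    rw [hmem] at hw ⊢
    rw [← Module.End.mul_apply, ← map_mul, hy, map_mul, Module.End.mul_apply, hw, map_smul]

/-- Let `p` be a prime, `𝔽` a finite field of characteristic `p`, and `G₁`, `G₂` arbitrary groups.
Let `V` be a 2-dimensional `𝔽`-vector space with an `𝔽`-linear action `ρ` of `G₁ × G₂`, and
`W ⊆ V` a 1-dimensional stable subspace on which `G₁ × G₂` acts through a character `η′` and on
the quotient `V/W` through a character `η`.  If the extension `0 → W → V → V/W → 0` does not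
split as a sequence of representations of `G₁` (acting via `g ↦ (g,1)`), i.e. there is no
`G₁`-stable line `W′` complementary to `W`, then `η (1, g) = η′ (1, g)` for every `g ∈ G₂`.
In particular, if `η ≠ η′`, then the extension splits as a representation of `G₁` or as a
representation of `G₂` (acting via `g ↦ (1,g)`). -/
theorem stmt0 (p : ℕ) (hp : p.Prime) (𝔽 : Type*) [Field 𝔽] [Fintype 𝔽] [CharP 𝔽 p]
    (G₁ G₂ : Type*) [Group G₁] [Group G₂]
    (V : Type*) [AddCommGroup V] [Module 𝔽 V] (hV : Module.finrank 𝔽 V = 2)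
    (ρ : Representation 𝔽 (G₁ × G₂) V)
    (W : Submodule 𝔽 V) (hW : Module.finrank 𝔽 ↥W = 1)
    (η' η : (G₁ × G₂) →* 𝔽ˣ)
    (hWstab : ∀ g : G₁ × G₂, ∀ w ∈ W, ρ g w ∈ W)
    (hη' : ∀ g : G₁ × G₂, ∀ w ∈ W, ρ g w = (η' g : 𝔽) • w)
    (hη : ∀ (g : G₁ × G₂) (v : V), ρ g v - (η g : 𝔽) • v ∈ W) :
    ((¬ ∃ W' : Submodule 𝔽 V, Module.finrank 𝔽 ↥W' = 1 ∧ IsCompl W W' ∧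
        ∀ g : G₁, ∀ w ∈ W', ρ (g, 1) w ∈ W') →
      ∀ g : G₂, η (1, g) = η' (1, g)) ∧
    (η ≠ η' →
      (∃ W' : Submodule 𝔽 V, Module.finrank 𝔽 ↥W' = 1 ∧ IsCompl W W' ∧
        ∀ g : G₁, ∀ w ∈ W', ρ (g, 1) w ∈ W') ∨
      (∃ W' : Submodule 𝔽 V, Module.finrank 𝔽 ↥W' = 1 ∧ IsCompl W W' ∧
        ∀ g : G₂, ∀ w ∈ W', ρ (1, g) w ∈ W')) := by
  have key1 : (¬ ∃ W' : Submodule 𝔽 V, Module.finrank 𝔽 ↥W' = 1 ∧ IsCompl W W' ∧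
        ∀ g : G₁, ∀ w ∈ W', ρ (g, 1) w ∈ W') → ∀ g : G₂, η (1, g) = η' (1, g) := by
    intro hn g
    by_contra hne
    obtain ⟨W', h1, h2, h3⟩ := split_of_ne hV ρ W hW (1, g) _ _
      (fun h => hne (Units.ext h)) (hη' (1, g)) (hη (1, g))
    exact hn ⟨W', h1, h2, fun y => h3 (y, 1) (by simp)⟩
  refine ⟨key1, fun hne => ?_⟩
  by_contra hn
  rw [not_or] at hn
  apply hne
  ext1 ⟨g, k⟩
  have e1 := key1 hn.1 k
  have e2 : η (g, 1) = η' (g, 1) := by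
    by_contra hne
    obtain ⟨W', h1, h2, h3⟩ := split_of_ne hV ρ W hW (g, 1) _ _
      (fun h => hne (Units.ext h)) (hη' (g, 1)) (hη (g, 1))
    exact hn.2 ⟨W', h1, h2, fun y => h3 (1, y) (by simp)⟩
  have e : ((g, k) : G₁ × G₂) = (g, 1) * (1, k) := by simp
  rw [e, map_mul, map_mul, e1, e2]
end

section
/- Let p be a prime, 𝔽 a finite field of characteristic p, Δ a finite index set, and (G_α)_{α∈Δ} a family of groups; set G := ∏_{α∈Δ} G_α. Let V be a 2-dimensional 𝔽-vector space with an 𝔽-linear G-action and W ⊆ V a 1-dimensional G-stable subspace such that G acts on W through a character η′ : G → 𝔽ˣ and on V/W through a character η : G → 𝔽ˣ. Regard each G_α as a subgroup of G via the α-th coordinate embedding. Then: (a) if for some α ∈ Δ the extension 0 → W → V → V/W → 0 does not split as a sequence of G_α-representations (i.e. there is no G_α-stable line complementary to W), then η and η′ have equal restrictions to G_β for every β ∈ Δ with β ≠ α; (b) consequently, if η ≠ η′, then there is at most one α ∈ Δ such that the restriction of V to G_α does not split. -/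
/-- The extension `0 → W → V → V/W → 0` splits as a representation of the `α`-th factor `G α`
(embedded in `∏ β, G β` via `Pi.mulSingle`): there is a `G α`-stable line `W'` complementary
to `W`. -/
def SplitsAt {𝔽 : Type*} [Field 𝔽] {Δ : Type*} [DecidableEq Δ] {G : Δ → Type*}
    [∀ α, Group (G α)] {V : Type*} [AddCommGroup V] [Module 𝔽 V]
    (ρ : Representation 𝔽 (∀ α, G α) V) (W : Submodule 𝔽 V) (α : Δ) : Prop :=
  ∃ W' : Submodule 𝔽 V, Module.finrank 𝔽 ↥W' = 1 ∧ IsCompl W W' ∧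
    ∀ g : G α, ∀ w ∈ W', ρ (Pi.mulSingle α g) w ∈ W'

/-- Let `p` be a prime, `𝔽` a finite field of characteristic `p`, `Δ` a finite index set and
`(G α)_{α ∈ Δ}` a family of groups; set `G := ∏ α, G α`.  Let `V` be a 2-dimensional
`𝔽`-vector space with an `𝔽`-linear `G`-action `ρ` and `W ⊆ V` a 1-dimensional stable subspace
on which `G` acts through a character `η′` and on `V/W` through a character `η`.  Then:
(a) if for some `α ∈ Δ` the extension `0 → W → V → V/W → 0` does not split as a sequence of
`G α`-representations, then `η` and `η′` have equal restrictions to `G β` for every `β ≠ α`;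
(b) if `η ≠ η′`, there is at most one `α ∈ Δ` such that the restriction of `V` to `G α` does
not split. -/
theorem stmt1 (p : ℕ) (hp : p.Prime) (𝔽 : Type*) [Field 𝔽] [Fintype 𝔽] [CharP 𝔽 p]
    (Δ : Type*) [Fintype Δ] [DecidableEq Δ] (G : Δ → Type*) [∀ α, Group (G α)]
    (V : Type*) [AddCommGroup V] [Module 𝔽 V] (hV : Module.finrank 𝔽 V = 2)
    (ρ : Representation 𝔽 (∀ α, G α) V)
    (W : Submodule 𝔽 V) (hW : Module.finrank 𝔽 ↥W = 1)
    (η' η : (∀ α, G α) →* 𝔽ˣ)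
    (hWstab : ∀ g : ∀ α, G α, ∀ w ∈ W, ρ g w ∈ W)
    (hη' : ∀ g : ∀ α, G α, ∀ w ∈ W, ρ g w = (η' g : 𝔽) • w)
    (hη : ∀ (g : ∀ α, G α) (v : V), ρ g v - (η g : 𝔽) • v ∈ W) :
    (∀ α : Δ, ¬ SplitsAt ρ W α → ∀ β : Δ, β ≠ α → ∀ g : G β,
      η (Pi.mulSingle β g) = η' (Pi.mulSingle β g)) ∧
    (η ≠ η' → {α : Δ | ¬ SplitsAt ρ W α}.Subsingleton) := by
  have main : ∀ α : Δ, ¬ SplitsAt ρ W α → ∀ β : Δ, β ≠ α → ∀ g : G β,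
      η (Pi.mulSingle β g) = η' (Pi.mulSingle β g) := by
    intro α hα β hβ h
    by_contra hne
    apply hα
    set H : ∀ γ, G γ := Pi.mulSingle β h with hH
    have hd : (η H : 𝔽) - (η' H : 𝔽) ≠ 0 := by
      rw [sub_ne_zero]
      exact fun e => hne (Units.ext e)
    haveI : FiniteDimensional 𝔽 V := Module.finite_of_finrank_pos (by omega)
    obtain ⟨v, hv⟩ : ∃ v, v ∉ W := by
      by_contra hall
      push Not at hall
      have : W = ⊤ := by ext x; simp [hall x]
      rw [this, finrank_top] at hW
      omega
    obtain ⟨w, hw, hvw⟩ : ∃ w ∈ W, ρ H v = (η H : 𝔽) • v + w :=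
      ⟨_, hη H v, by abel⟩
    obtain ⟨u, hu⟩ : ∃ u, u = ((η H : 𝔽) - (η' H : 𝔽)) • v + w := ⟨_, rfl⟩
    have huW : u ∉ W := by
      intro hmem
      rw [hu, W.add_mem_iff_left hw, W.smul_mem_iff hd] at hmem
      exact hv hmem
    have hu0 : u ≠ 0 := fun e => huW (e ▸ W.zero_mem)
    have hHu : ρ H u = (η H : 𝔽) • u := by
      rw [hu, map_add, map_smul, hvw, hη' H w hw]
      module
    have hdis : Disjoint W (Submodule.span 𝔽 {u}) :=
      (Submodule.disjoint_span_singleton' hu0).2 huW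
    refine ⟨Submodule.span 𝔽 {u}, finrank_span_singleton hu0, ⟨hdis, ?_⟩, ?_⟩
    · rw [codisjoint_iff]
      apply Submodule.eq_top_of_disjoint _ _ _ hdis
      rw [hV, hW, finrank_span_singleton hu0]
    · intro g x hx
      obtain ⟨c, rfl⟩ := Submodule.mem_span_singleton.1 hx
      rw [map_smul]
      apply Submodule.smul_mem
      have hc : H * Pi.mulSingle α g = Pi.mulSingle α g * H :=
        Pi.mulSingle_commute hβ h g
      obtain ⟨K, hK⟩ : ∃ K : ∀ γ, G γ, K = Pi.mulSingle α g := ⟨_, rfl⟩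
      rw [← hK] at hc ⊢
      obtain ⟨w', hw', hgu⟩ : ∃ w' ∈ W, ρ K u = (η K : 𝔽) • u + w' :=
        ⟨_, hη K u, by abel⟩
      have e : ρ H (ρ K u) = ρ K (ρ H u) := by
        rw [← Module.End.mul_apply, ← map_mul, hc, map_mul, Module.End.mul_apply]
      rw [hHu, map_smul, hgu, map_add, map_smul, hHu, hη' H w' hw'] at e
      have e2 : ((η H : 𝔽) - (η' H : 𝔽)) • w' = 0 := by
        rw [smul_add, smul_comm (η K : 𝔽)] at e
        rw [sub_smul, add_left_cancel e, sub_self]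
      have hw0 : w' = 0 := (smul_eq_zero.1 e2).resolve_left hd
      rw [hgu, hw0, add_zero]
      exact Submodule.smul_mem _ _ (Submodule.mem_span_singleton_self u)
  refine ⟨main, fun hne α hα β hβ => ?_⟩
  by_contra hab
  apply hne
  apply MonoidHom.pi_ext
  intro γ x
  by_cases hγ : γ = α
  · exact main β hβ γ (fun e => hab (hγ.symm.trans e)) x
  · exact main α hα γ hγ x
end

section
/- Let p be a prime, n ≥ 1, and fix a composition n = n₁ + … + n_r. Let P ≤ GL_n(ℚ_p) be the corresponding standard parabolic subgroup of invertible block upper triangular matrices, L ≤ P its Levi subgroup of invertible block diagonal matrices, and U ⊴ P its unipotent radical consisting of block upper triangular matrices whose diagonal blocks are identity matrices. Let F/ℚ_p be a finite field extension with ring of integers 𝒪_F and uniformizer ϖ, and let h ≥ 1. Let π be a smooth representation of P on an 𝒪_F/ϖ^h-module such that, as a representation of L by restriction along L ↪ P, π is admissible and of finite length. Then the unipotent radical U acts trivially on π: u·x = x for all u ∈ U and x ∈ π. -/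
open Filter Topology in
theorem aux_conj (p : ℕ) [Fact p.Prime] (n r : ℕ) (f : Fin n → Fin r)
    (M : Matrix (Fin n) (Fin n) ℚ_[p]) (hM : Matrix.BlockTriangular M f)
    (hM1 : ∀ i j : Fin n, f i = f j → M i j = (1 : Matrix (Fin n) (Fin n) ℚ_[p]) i j) :
    Tendsto (fun N : ℕ => (Matrix.diagonal fun i => ((p : ℚ_[p])⁻¹ ^ (f i : ℕ)) ^ N) * M *
      (Matrix.diagonal fun i => ((p : ℚ_[p]) ^ (f i : ℕ)) ^ N)) atTop (𝓝 1) := by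
  have hp : (p : ℚ_[p]) ≠ 0 := by exact_mod_cast (Fact.out : p.Prime).ne_zero
  refine tendsto_pi_nhds.2 fun i => tendsto_pi_nhds.2 fun j => ?_
  simp only [Matrix.mul_diagonal, Matrix.diagonal_mul]
  rcases lt_trichotomy (f i) (f j) with hij | hij | hij
  · have hne : i ≠ j := by rintro rfl; exact lt_irrefl _ hij
    rw [Matrix.one_apply_ne hne]
    have key : ∀ N : ℕ, ((p : ℚ_[p])⁻¹ ^ (f i : ℕ)) ^ N * M i j * ((p : ℚ_[p]) ^ (f j : ℕ)) ^ N
        = ((p : ℚ_[p]) ^ ((f j : ℕ) - f i)) ^ N * M i j := by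
      intro N
      have : (p : ℚ_[p]) ^ (f j : ℕ) = (p : ℚ_[p]) ^ ((f j : ℕ) - f i) * (p : ℚ_[p]) ^ (f i : ℕ) := by
        rw [← pow_add]; congr 1
        have : (f i : ℕ) < f j := hij
        omega
      rw [this, mul_pow, inv_pow, inv_pow]
      field_simp
    simp only [key]
    rw [← zero_mul (M i j)]
    refine Tendsto.mul_const _ (tendsto_pow_atTop_nhds_zero_of_norm_lt_one ?_)
    rw [norm_pow]
    refine pow_lt_one₀ (norm_nonneg _) Padic.norm_p_lt_one ?_
    have : (f i : ℕ) < f j := hij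
    omega
  · have key : ∀ N : ℕ, ((p : ℚ_[p])⁻¹ ^ (f i : ℕ)) ^ N * M i j * ((p : ℚ_[p]) ^ (f j : ℕ)) ^ N
        = (1 : Matrix (Fin n) (Fin n) ℚ_[p]) i j := by
      intro N
      rw [← hij, hM1 i j hij, inv_pow, inv_pow]
      field_simp
    simp only [key]
    exact tendsto_const_nhds
  · have hne : i ≠ j := by rintro rfl; exact lt_irrefl _ hij
    rw [hM hij, Matrix.one_apply_ne hne]
    simp

noncomputable def auxZ (p : ℕ) [Fact p.Prime] (n r : ℕ) (f : Fin n → Fin r) :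
    GL (Fin n) ℚ_[p] where
  val := Matrix.diagonal fun i => (p : ℚ_[p])⁻¹ ^ (f i : ℕ)
  inv := Matrix.diagonal fun i => (p : ℚ_[p]) ^ (f i : ℕ)
  val_inv := by
    have hp : (p : ℚ_[p]) ≠ 0 := by exact_mod_cast (Fact.out : p.Prime).ne_zero
    simp [Matrix.diagonal_mul_diagonal, hp]
  inv_val := by
    have hp : (p : ℚ_[p]) ≠ 0 := by exact_mod_cast (Fact.out : p.Prime).ne_zero
    simp [Matrix.diagonal_mul_diagonal, hp]

open Filter Topology in
theorem aux_tendsto (p : ℕ) [Fact p.Prime] (n r : ℕ) (f : Fin n → Fin r)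
    (U : Subgroup (GL (Fin n) ℚ_[p]))
    (hU : ∀ g : GL (Fin n) ℚ_[p], g ∈ U ↔
      (Matrix.BlockTriangular (g : Matrix (Fin n) (Fin n) ℚ_[p]) f ∧
        ∀ i j : Fin n, f i = f j → (g : Matrix (Fin n) (Fin n) ℚ_[p]) i j
          = (1 : Matrix (Fin n) (Fin n) ℚ_[p]) i j)) (u : GL (Fin n) ℚ_[p]) (hu : u ∈ U) :
    Tendsto (fun N : ℕ => auxZ p n r f ^ N * u * (auxZ p n r f ^ N)⁻¹) atTop (𝓝 1) := by
  have key : ∀ u ∈ U, Tendsto (fun N : ℕ => ((auxZ p n r f ^ N * u * (auxZ p n r f ^ N)⁻¹ :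
      GL (Fin n) ℚ_[p]) : Matrix (Fin n) (Fin n) ℚ_[p])) atTop (𝓝 1) := by
    intro u hu
    have := aux_conj p n r f u ((hU u).1 hu).1 ((hU u).1 hu).2
    convert this using 2 with N
    rw [← inv_pow]
    simp only [Units.val_mul, Units.val_pow_eq_pow_val]
    change (Matrix.diagonal fun i => (p : ℚ_[p])⁻¹ ^ (f i : ℕ)) ^ N * _ *
      (Matrix.diagonal fun i => (p : ℚ_[p]) ^ (f i : ℕ)) ^ N = _
    rw [Matrix.diagonal_pow, Matrix.diagonal_pow]
    rfl
  rw [Units.isInducing_embedProduct.tendsto_nhds_iff]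
  refine Tendsto.prodMk_nhds (key u hu) ?_
  refine (MulOpposite.continuous_op.tendsto _).comp ?_
  have := key u⁻¹ (U.inv_mem hu)
  simpa [mul_assoc] using this

theorem aux_G0 (p : ℕ) [Fact p.Prime] (n : ℕ) : ∃ G0 : Subgroup (GL (Fin n) ℚ_[p]),
    IsOpen (G0 : Set (GL (Fin n) ℚ_[p])) ∧ IsCompact (G0 : Set (GL (Fin n) ℚ_[p])) := by
  have e : ((PadicInt.subring p : Subring ℚ_[p]) : Set ℚ_[p]) = Metric.closedBall 0 1 := by
    ext x; simp [PadicInt.subring]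
  refine ⟨(PadicInt.subring p).matrix.toSubmonoid.units, ?_, ?_⟩
  · apply Submonoid.isOpen_units
    change IsOpen (Set.matrix ((PadicInt.subring p : Subring ℚ_[p]) : Set ℚ_[p]))
    rw [e]
    exact (IsUltrametricDist.isOpen_closedBall _ one_ne_zero).matrix
  · apply Submonoid.units_isCompact
    change IsCompact (Set.matrix ((PadicInt.subring p : Subring ℚ_[p]) : Set ℚ_[p]))
    rw [e]
    exact (isCompact_closedBall _ _).matrix


/-- Fix a prime `p`, `n ≥ 1` and a composition of `n` (encoded by the monotone surjective block-index
map `f : Fin n → Fin r`).  Let `P ≤ GL_n(ℚ_p)` be the corresponding standard parabolic of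
block upper triangular matrices, `L ≤ P` its Levi of block diagonal matrices and `U` its
unipotent radical (block upper triangular with identity diagonal blocks).  Let `F/ℚ_p` be a
finite extension `K` with ring of integers `𝒪 = integralClosure ℤ_[p] K` and uniformizer `ϖ`
(an irreducible element of `𝒪`), and `h ≥ 1`.  Let `π` be a smooth representation of `P` on an
`𝒪/ϖ^h`-module which, as a representation of `L`, is admissible and of finite length (as a
module over the group algebra).  Then `U` acts trivially on `π`. -/
theorem stmt2 (p : ℕ) [Fact p.Prime] (n r : ℕ) (hn : 1 ≤ n)
    (f : Fin n → Fin r) (hmono : Monotone f) (hsurj : Function.Surjective f)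
    (P L U : Subgroup (GL (Fin n) ℚ_[p]))
    (hP : ∀ g : GL (Fin n) ℚ_[p], g ∈ P ↔
      Matrix.BlockTriangular (g : Matrix (Fin n) (Fin n) ℚ_[p]) f)
    (hL : ∀ g : GL (Fin n) ℚ_[p], g ∈ L ↔
      ∀ i j : Fin n, f i ≠ f j → (g : Matrix (Fin n) (Fin n) ℚ_[p]) i j = 0)
    (hU : ∀ g : GL (Fin n) ℚ_[p], g ∈ U ↔
      (Matrix.BlockTriangular (g : Matrix (Fin n) (Fin n) ℚ_[p]) f ∧
        ∀ i j : Fin n, f i = f j → (g : Matrix (Fin n) (Fin n) ℚ_[p]) i j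
          = (1 : Matrix (Fin n) (Fin n) ℚ_[p]) i j))
    (hLP : L ≤ P)
    (K : Type*) [Field K] [Algebra ℚ_[p] K] [FiniteDimensional ℚ_[p] K]
    [Algebra ℤ_[p] K] [IsScalarTower ℤ_[p] ℚ_[p] K]
    (ϖ : integralClosure ℤ_[p] K) (hϖ : Irreducible ϖ) (h : ℕ) (hh : 1 ≤ h)
    (π : Type*) [AddCommGroup π]
    [Module ((integralClosure ℤ_[p] K) ⧸ Ideal.span {ϖ ^ h}) π]
    (ρ : Representation ((integralClosure ℤ_[p] K) ⧸ Ideal.span {ϖ ^ h}) P π)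
    -- `π` is a smooth representation of `P`: every vector has open stabilizer
    (hsmooth : ∀ x : π, IsOpen {g : P | ρ g x = x})
    -- the restriction of `π` to `L` is admissible: the fixed points of every compact open
    -- subgroup of `L` form a finitely generated `𝒪/ϖ^h`-module
    (hadm : ∀ Kc : Subgroup L, IsOpen (Kc : Set L) → IsCompact (Kc : Set L) →
      (⨅ g ∈ Kc, LinearMap.eqLocus ((ρ.comp (Subgroup.inclusion hLP)) g)
        LinearMap.id).FG)
    -- the restriction of `π` to `L` has finite length as a module over the group algebra
    (hfl : IsFiniteLength
      (MonoidAlgebra ((integralClosure ℤ_[p] K) ⧸ Ideal.span {ϖ ^ h}) L)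
      (Representation.asModule (ρ.comp (Subgroup.inclusion hLP)))) :
    ∀ g : P, (g : GL (Fin n) ℚ_[p]) ∈ U → ∀ x : π, ρ g x = x := by
  classical
  intro g hg x
  have hZL : auxZ p n r f ∈ L := by
    rw [hL]
    intro i j hij
    exact Matrix.diagonal_apply_ne _ (fun h => hij (h ▸ rfl))
  have hZc : ∀ l ∈ L, l * auxZ p n r f = auxZ p n r f * l := by
    intro l hl
    ext i j
    have e : ((auxZ p n r f : GL (Fin n) ℚ_[p]) : Matrix (Fin n) (Fin n) ℚ_[p])
      = Matrix.diagonal fun i => (p : ℚ_[p])⁻¹ ^ (f i : ℕ) := rfl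
    rw [Units.val_mul, Units.val_mul, e]
    rw [Matrix.mul_diagonal, Matrix.diagonal_mul]
    by_cases hij : f i = f j
    · rw [hij, mul_comm]
    · rw [(hL l).1 hl i j hij]; simp
  set z : L := ⟨auxZ p n r f, hZL⟩ with hz
  have hzc : ∀ (l : L) (N : ℕ), l * z ^ N = z ^ N * l := by
    intro l N
    have : Commute l z := Subtype.ext (hZc l l.2)
    exact this.pow_right N
  -- the compact open subgroup
  have hLclosed : IsClosed (L : Set (GL (Fin n) ℚ_[p])) := by
    have : (L : Set (GL (Fin n) ℚ_[p])) = ⋂ i, ⋂ j, ⋂ (_ : f i ≠ f j),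
        {g : GL (Fin n) ℚ_[p] | (g : Matrix (Fin n) (Fin n) ℚ_[p]) i j = 0} := by
      ext g; simp [hL]
    rw [this]
    refine isClosed_iInter fun i => isClosed_iInter fun j => isClosed_iInter fun _ => ?_
    exact isClosed_eq (Units.continuous_val.matrix_elem i j) continuous_const
  obtain ⟨G0, hG0o, hG0c⟩ := aux_G0 p n
  let σ := ρ.comp (Subgroup.inclusion hLP)
  have hσ : ∀ l, σ l = ρ (Subgroup.inclusion hLP l) := fun _ => rfl
  let S : Subgroup L :=
    { carrier := {l | σ l x = x}
      one_mem' := by simp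
      mul_mem' := by
        intro a b ha hb
        change σ (a * b) x = x
        rw [map_mul, Module.End.mul_apply, show σ b x = x from hb, show σ a x = x from ha]
      inv_mem' := by
        intro a ha
        change σ a⁻¹ x = x
        conv_lhs => rw [← show σ a x = x from ha]
        rw [← Module.End.mul_apply, ← map_mul]; simp }
  have hincl : Continuous (Subgroup.inclusion hLP) :=
    Continuous.subtype_mk continuous_subtype_val _
  have hSo : IsOpen (S : Set L) := (hsmooth x).preimage hincl
  let Kc : Subgroup L := G0.comap L.subtype ⊓ S
  have hKo : IsOpen (Kc : Set L) := (hG0o.preimage continuous_subtype_val).inter hSo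
  have hKc : IsCompact (Kc : Set L) :=
    (hLclosed.isClosedEmbedding_subtypeVal.isCompact_preimage hG0c).inter_right
      (S.isClosed_of_isOpen hSo)
  obtain ⟨T, hT⟩ := hadm Kc hKo hKc
  -- a neighbourhood of one fixing all invariants
  have hall : ∀ q : P, (∀ t ∈ T, ρ q t = t) → ∀ y : π, (∀ l ∈ Kc, σ l y = y) → ρ q y = y := by
    intro q hq y hy
    have hy' : y ∈ Submodule.span ((integralClosure ℤ_[p] K) ⧸ Ideal.span {ϖ ^ h}) (T : Set π) := by
      rw [hT]
      simp only [Submodule.mem_iInf, LinearMap.mem_eqLocus]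
      exact hy
    have hle : Submodule.span ((integralClosure ℤ_[p] K) ⧸ Ideal.span {ϖ ^ h}) (T : Set π) ≤ LinearMap.eqLocus (ρ q) LinearMap.id :=
      Submodule.span_le.2 hq
    exact hle hy'
  have hnhd : {q : P | ∀ t ∈ T, ρ q t = t} ∈ nhds (1 : P) := by
    have : IsOpen {q : P | ∀ t ∈ T, ρ q t = t} := by
      have : {q : P | ∀ t ∈ T, ρ q t = t} = ⋂ t ∈ T, {q : P | ρ q t = t} := by
        ext; simp
      rw [this]
      exact isOpen_biInter_finset fun t _ => hsmooth t
    exact this.mem_nhds (by simp)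
  set w : P := Subgroup.inclusion hLP z with hw
  have htend : Filter.Tendsto (fun N : ℕ => w ^ N * g * (w ^ N)⁻¹) Filter.atTop (nhds 1) := by
    rw [Topology.IsInducing.subtypeVal.tendsto_nhds_iff]
    exact aux_tendsto p n r f U hU g hg
  obtain ⟨N, hN⟩ := (htend.eventually hnhd).exists
  have h1 : ∀ l ∈ Kc, σ l (ρ (w ^ N) x) = ρ (w ^ N) x := by
    intro l hl
    have e : ρ (w ^ N) = σ (z ^ N) := rfl
    rw [e, ← Module.End.mul_apply, ← map_mul, hzc, map_mul, Module.End.mul_apply,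
      show σ l x = x from hl.2]
  have h2 := hall _ hN _ h1
  rw [← Module.End.mul_apply, ← map_mul, inv_mul_cancel_right, map_mul, Module.End.mul_apply] at h2
  have h4 : ∀ y : π, ρ (w ^ N)⁻¹ (ρ (w ^ N) y) = y := by
    intro y
    rw [← Module.End.mul_apply, ← map_mul, inv_mul_cancel, map_one, Module.End.one_apply]
  rw [← h4 (ρ g x), h2, h4]
end

section
/- Fix a prime p and an integer n ≥ 2. G := GL_n(ℚ_p) is the group of invertible n×n matrices over ℚ_p. B ≤ G is the subgroup of invertible upper triangular matrices, N the group of upper triangular unipotent matrices (1 on the diagonal, 0 below), N₀ := N ∩ GL_n(ℤ_p) the elements of N with all entries in ℤ_p, and w₀ the permutation matrix of the involution i ↦ n+1−i. Then for every n×n permutation matrix w the following equalities of subsets of G hold: w₀⁻¹w⁻¹N₀wB = (N₀w₀B) ∩ (w₀⁻¹w⁻¹NwB) = (N₀ ∩ w₀⁻¹w⁻¹N₀ww₀)·w₀·B. (Equivalently, writing 𝒞₀^w := N₀wB/B, 𝒞^w := NwB/B, 𝒞₀ := N₀w₀B/B for subsets of the flag variety G/B and N_{0,v} := N₀ ∩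 vN₀v⁻¹, one has w₀⁻¹w⁻¹𝒞₀^w = 𝒞₀ ∩ w₀⁻¹w⁻¹𝒞^w = N_{0,w₀⁻¹w⁻¹}w₀B/B.) -/
open scoped Pointwise

noncomputable def colVec {n : ℕ} {K : Type*} [Field K] (m : Matrix (Fin n) (Fin n) K)
    (τ : Equiv.Perm (Fin n)) (j : Fin n) (i : Fin n) : K :=
  if i = j then 1 else if j < i ∧ τ i < τ j then
    -∑ k : {k : Fin n // τ i < τ k}, m i k.1 * colVec m τ j k.1 else 0
termination_by n - (τ i).val
decreasing_by
  have h1 := k.2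
  have h2 := (τ k.1).isLt
  have h3 : (τ i).val < (τ k.1).val := h1
  omega

theorem colVec_mem {n : ℕ} {K : Type*} [Field K] (S : Subring K)
    (m : Matrix (Fin n) (Fin n) K) (hm : ∀ i j, m i j ∈ S)
    (τ : Equiv.Perm (Fin n)) (j : Fin n) : ∀ (d : ℕ) (i : Fin n), n - (τ i).val ≤ d →
      colVec m τ j i ∈ S := by
  intro d
  induction d with
  | zero => intro i h; have := (τ i).isLt; omega
  | succ d ih =>
    intro i h
    rw [colVec]
    split_ifs
    · exact S.one_mem
    · refine S.neg_mem (S.sum_mem fun k _ => S.mul_mem (hm _ _) (ih _ ?_))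
      have h3 : (τ i).val < (τ k.1).val := k.2
      have h2 := (τ k.1).isLt
      omega
    · exact S.zero_mem

theorem colVec_self {n : ℕ} {K : Type*} [Field K] (m : Matrix (Fin n) (Fin n) K)
    (τ : Equiv.Perm (Fin n)) (j : Fin n) : colVec m τ j j = 1 := by
  rw [colVec]; simp

theorem colVec_zero {n : ℕ} {K : Type*} [Field K] (m : Matrix (Fin n) (Fin n) K)
    (τ : Equiv.Perm (Fin n)) (j i : Fin n) (hij : i ≠ j) (h : ¬ (j < i ∧ τ i < τ j)) :
    colVec m τ j i = 0 := by
  rw [colVec]; simp [hij, h]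

theorem mul_colVec {n : ℕ} {K : Type*} [Field K] (m : Matrix (Fin n) (Fin n) K)
    (τ : Equiv.Perm (Fin n)) (h0 : ∀ i j, τ j < τ i → m i j = 0) (h1 : ∀ i, m i i = 1)
    (j i : Fin n) :
    ∑ k, m i k * colVec m τ j k =
      colVec m τ j i + ∑ k : {k : Fin n // τ i < τ k}, m i k.1 * colVec m τ j k.1 := by
  classical
  rw [← Finset.add_sum_erase _ _ (Finset.mem_univ i), h1, one_mul]
  congr 1
  rw [← Finset.sum_subtype (p := fun k => τ i < τ k)
    (Finset.univ.filter (fun k => τ i < τ k)) (by simp) (fun k => m i k * colVec m τ j k)]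
  symm
  apply Finset.sum_subset
  · intro k hk
    simp only [Finset.mem_filter, Finset.mem_univ, true_and] at hk
    simp only [Finset.mem_erase, Finset.mem_univ, and_true]
    rintro rfl; exact lt_irrefl _ hk
  · intro k hk hk'
    simp only [Finset.mem_filter, Finset.mem_univ, true_and, not_lt] at hk'
    simp only [Finset.mem_erase, Finset.mem_univ, and_true] at hk
    rw [h0 i k (lt_of_le_of_ne hk' (fun h => hk (τ.injective h))), zero_mul]

/-- the factorization -/
theorem factor {n : ℕ} {K : Type*} [Field K] (S : Subring K)
    (m : Matrix (Fin n) (Fin n) K) (hm : ∀ i j, m i j ∈ S)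
    (τ : Equiv.Perm (Fin n)) (h0 : ∀ i j, τ j < τ i → m i j = 0) (h1 : ∀ i, m i i = 1) :
    ∃ c : Matrix (Fin n) (Fin n) K, (∀ i j, i < j → c i j = 0) ∧ (∀ i, c i i = 1) ∧
      (∀ i j, (m * c) i j ∈ S) ∧ (∀ i j, j < i → (m * c) i j = 0) ∧
      (∀ i j, τ j < τ i → (m * c) i j = 0) ∧ (∀ i, (m * c) i i = 1) := by
  refine ⟨Matrix.of fun i j => colVec m τ j i, ?_, fun i => colVec_self m τ i, ?_, ?_, ?_, ?_⟩
  · intro i j hij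
    exact colVec_zero _ _ _ _ hij.ne (fun h => lt_asymm h.1 hij)
  · intro i j
    rw [Matrix.mul_apply]
    exact S.sum_mem fun k _ => S.mul_mem (hm _ _) (colVec_mem S m hm τ j _ k le_rfl)
  · intro i j hij
    rw [Matrix.mul_apply]
    simp only [Matrix.of_apply]
    rw [mul_colVec m τ h0 h1]
    by_cases h : τ i < τ j
    · nth_rewrite 1 [colVec]
      rw [if_neg hij.ne', if_pos ⟨hij, h⟩, neg_add_cancel]
    · rw [colVec_zero _ _ _ _ hij.ne' (fun h' => h h'.2), zero_add]
      refine Finset.sum_eq_zero fun k _ => ?_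
      have hk := k.2
      rw [colVec_zero, mul_zero]
      · intro e; rw [e] at hk; exact h hk
      · exact fun h' => h (hk.trans h'.2)
  · intro i j hij
    rw [Matrix.mul_apply]
    simp only [Matrix.of_apply]
    refine Finset.sum_eq_zero fun k _ => ?_
    by_cases h : τ k < τ i
    · rw [h0 _ _ h, zero_mul]
    · rw [colVec_zero, mul_zero]
      · rintro rfl; exact h hij
      · exact fun h' => h (h'.2.trans hij)
  · intro i
    rw [Matrix.mul_apply]
    simp only [Matrix.of_apply]
    rw [mul_colVec m τ h0 h1, colVec_self]
    rw [Finset.sum_eq_zero, add_zero]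
    intro k _
    have hk := k.2
    rw [colVec_zero, mul_zero]
    · intro e; rw [e] at hk; exact lt_irrefl _ hk
    · exact fun h' => lt_asymm hk h'.2

theorem upper_inv {n : ℕ} {K : Type*} [Field K] (g : GL (Fin n) K)
    (h : ∀ i j : Fin n, j < i → (g : Matrix (Fin n) (Fin n) K) i j = 0) :
    ∀ i j : Fin n, j < i → ((g⁻¹ : GL (Fin n) K) : Matrix (Fin n) (Fin n) K) i j = 0 := by
  have hb : (g : Matrix (Fin n) (Fin n) K).BlockTriangular id := fun i j hij => h i j hij
  haveI : Invertible (g : Matrix (Fin n) (Fin n) K) := g.invertible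
  have := Matrix.blockTriangular_inv_of_blockTriangular hb
  intro i j hij
  rw [Matrix.coe_units_inv]
  exact this hij

theorem upper_mul {n : ℕ} {K : Type*} [Field K] (g g' : GL (Fin n) K)
    (h : ∀ i j : Fin n, j < i → (g : Matrix (Fin n) (Fin n) K) i j = 0)
    (h' : ∀ i j : Fin n, j < i → (g' : Matrix (Fin n) (Fin n) K) i j = 0) :
    ∀ i j : Fin n, j < i → ((g * g' : GL (Fin n) K) : Matrix (Fin n) (Fin n) K) i j = 0 := by
  have hb : (g : Matrix (Fin n) (Fin n) K).BlockTriangular id := fun i j hij => h i j hij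
  have hb' : (g' : Matrix (Fin n) (Fin n) K).BlockTriangular id := fun i j hij => h' i j hij
  intro i j hij
  exact (hb.mul hb') hij

/-- conjugation by a permutation matrix -/
theorem conj_apply {n : ℕ} {K : Type*} [Field K] (q g : GL (Fin n) K) (ρ : Equiv.Perm (Fin n))
    (hq : ∀ i j : Fin n, (q : Matrix (Fin n) (Fin n) K) i j = if i = ρ j then 1 else 0)
    (i j : Fin n) :
    ((q⁻¹ * g * q : GL (Fin n) K) : Matrix (Fin n) (Fin n) K) i j =
      (g : Matrix (Fin n) (Fin n) K) (ρ i) (ρ j) := by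
  have e : q * (q⁻¹ * g * q) = g * q := by group
  have e2 := congrArg (fun x : GL (Fin n) K => (x : Matrix (Fin n) (Fin n) K) (ρ i) j) e
  simp only [Units.val_mul (a := q) (b := q⁻¹ * g * q), Units.val_mul (a := g) (b := q)] at e2
  rw [Matrix.mul_apply, Matrix.mul_apply] at e2
  simpa [hq, ρ.injective.eq_iff] using e2

theorem lemA {n : ℕ} {K : Type*} [Field K] (S : Subring K) (w w₀ : GL (Fin n) K)
    (σ : Equiv.Perm (Fin n))
    (hw : ∀ i j : Fin n, (w : Matrix (Fin n) (Fin n) K) i j = if i = σ j then 1 else 0)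
    (hw₀ : ∀ i j : Fin n,
      (w₀ : Matrix (Fin n) (Fin n) K) i j = if i = Fin.rev j then 1 else 0)
    (hq : ∀ i j : Fin n, ((w * w₀ : GL (Fin n) K) : Matrix (Fin n) (Fin n) K) i j =
      if i = (Fin.revPerm.trans σ) j then 1 else 0)
    (hww : w₀ * w₀ = 1)
    (g : GL (Fin n) K)
    (g0 : ∀ i j : Fin n, j < i → (g : Matrix (Fin n) (Fin n) K) i j = 0)
    (g1 : ∀ i : Fin n, (g : Matrix (Fin n) (Fin n) K) i i = 1)
    (gS : ∀ i j : Fin n, (g : Matrix (Fin n) (Fin n) K) i j ∈ S) :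
    ∃ a h b : GL (Fin n) K,
      (∀ i j : Fin n, j < i → (a : Matrix (Fin n) (Fin n) K) i j = 0) ∧
      (∀ i : Fin n, (a : Matrix (Fin n) (Fin n) K) i i = 1) ∧
      (∀ i j : Fin n, (a : Matrix (Fin n) (Fin n) K) i j ∈ S) ∧
      (∀ i j : Fin n, j < i → (h : Matrix (Fin n) (Fin n) K) i j = 0) ∧
      (∀ i : Fin n, (h : Matrix (Fin n) (Fin n) K) i i = 1) ∧
      (∀ i j : Fin n, j < i → (b : Matrix (Fin n) (Fin n) K) i j = 0) ∧
      a = w₀⁻¹ * w⁻¹ * h * (w * w₀) ∧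
      (∀ i j : Fin n, (h : Matrix (Fin n) (Fin n) K) i j =
        (a : Matrix (Fin n) (Fin n) K) ((Fin.revPerm.trans σ).symm i)
          ((Fin.revPerm.trans σ).symm j)) ∧
      w₀⁻¹ * w⁻¹ * (g * w) = a * w₀ * b := by
  set ρ : Equiv.Perm (Fin n) := Fin.revPerm.trans σ with hρ
  set q : GL (Fin n) K := w * w₀ with hqd
  have hm := conj_apply q g ρ hq
  set m : GL (Fin n) K := q⁻¹ * g * q with hmd
  obtain ⟨c, c0, c1, aS, a0, a0', a1⟩ := factor S (m : Matrix (Fin n) (Fin n) K)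
    (fun i j => by rw [hm]; exact gS _ _) ρ (fun i j hij => by rw [hm]; exact g0 _ _ hij)
    (fun i => by rw [hm]; exact g1 _)
  have hdet : c.det = 1 := by
    rw [Matrix.det_of_isLowerTriangular c (fun i j hij => c0 i j hij)]
    simp [c1]
  let C : GL (Fin n) K := Matrix.GeneralLinearGroup.mkOfDetNeZero c (by rw [hdet]; exact one_ne_zero)
  have hC : (C : Matrix (Fin n) (Fin n) K) = c := rfl
  have hmC : ((m * C : GL (Fin n) K) : Matrix (Fin n) (Fin n) K) = m * c := by
    rw [Units.val_mul, hC]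
  have hh : ∀ i j : Fin n, ((q * (m * C) * q⁻¹ : GL (Fin n) K) : Matrix (Fin n) (Fin n) K) i j =
        ((m * C : GL (Fin n) K) : Matrix (Fin n) (Fin n) K) (ρ.symm i) (ρ.symm j) := by
    intro i j
    have := conj_apply q (q * (m * C) * q⁻¹) ρ hq (ρ.symm i) (ρ.symm j)
    rw [Equiv.apply_symm_apply, Equiv.apply_symm_apply] at this
    rw [← this]
    congr 2
    group
  have hcon := conj_apply w₀ C Fin.revPerm hw₀
  refine ⟨m * C, q * (m * C) * q⁻¹, (w₀⁻¹ * C * w₀)⁻¹, ?_, ?_, ?_, ?_, ?_, ?_, ?_, hh, ?_⟩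
  · rw [hmC]; exact a0
  · rw [hmC]; exact a1
  · rw [hmC]; exact aS
  · intro i j hij
    rw [hh, hmC]; apply a0'; simpa using hij
  · intro i
    rw [hh, hmC]; apply a1
  · apply upper_inv
    intro i j hij
    rw [hcon, hC]
    apply c0
    simpa using hij
  · rw [hqd]; group
  · have hinv : w₀⁻¹ = w₀ := inv_eq_of_mul_eq_one_right hww
    have : m * C * w₀ * (w₀⁻¹ * C * w₀)⁻¹ = w₀⁻¹ * w⁻¹ * (g * w) * (w₀ * w₀) := by
      rw [hmd, hqd]; group
    rw [this, hww, mul_one]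

theorem lemU {n : ℕ} {K : Type*} [Field K] (w₀ : GL (Fin n) K)
    (hw₀ : ∀ i j : Fin n,
      (w₀ : Matrix (Fin n) (Fin n) K) i j = if i = Fin.rev j then 1 else 0)
    (hww : w₀ * w₀ = 1)
    (a a' b b' : GL (Fin n) K)
    (a0 : ∀ i j : Fin n, j < i → (a : Matrix (Fin n) (Fin n) K) i j = 0)
    (a1 : ∀ i : Fin n, (a : Matrix (Fin n) (Fin n) K) i i = 1)
    (a0' : ∀ i j : Fin n, j < i → (a' : Matrix (Fin n) (Fin n) K) i j = 0)
    (a1' : ∀ i : Fin n, (a' : Matrix (Fin n) (Fin n) K) i i = 1)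
    (b0 : ∀ i j : Fin n, j < i → (b : Matrix (Fin n) (Fin n) K) i j = 0)
    (b0' : ∀ i j : Fin n, j < i → (b' : Matrix (Fin n) (Fin n) K) i j = 0)
    (h : a * w₀ * b = a' * w₀ * b') : a = a' := by
  have hinv : w₀⁻¹ = w₀ := inv_eq_of_mul_eq_one_right hww
  have hl : a⁻¹ * a' = w₀⁻¹ * (b * b'⁻¹) * w₀ := by
    rw [hinv]
    have : a' = a * w₀ * b * b'⁻¹ * w₀⁻¹ := by rw [h]; group
    rw [this, hinv]; group
  have hup := upper_mul _ _ (upper_inv a a0) a0'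
  have hlo := upper_mul _ _ b0 (upper_inv b' b0')
  have hcon := conj_apply w₀ (b * b'⁻¹) Fin.revPerm hw₀
  rw [← hl] at hcon
  set l := a⁻¹ * a' with hld
  have hal : a' = a * l := by rw [hld]; group
  have hoff : ∀ i j : Fin n, i ≠ j → (l : Matrix (Fin n) (Fin n) K) i j = 0 := by
    intro i j hij
    rcases lt_or_gt_of_ne hij with h | h
    · rw [hcon]; apply hlo; simpa using h
    · exact hup i j h
  have hl1 : l = 1 := by
    ext i j
    by_cases hij : i = j
    · subst hij
      have := a1' i
      rw [hal, Units.val_mul, Matrix.mul_apply, Finset.sum_eq_single i, a1, one_mul] at this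
      · simpa using this
      · intro k _ hk; rw [hoff k i hk, mul_zero]
      · simp
    · rw [hoff i j hij]; simp [hij]
  rw [hal, hl1, mul_one]


set_option maxHeartbeats 1000000 in
set_option synthInstance.maxHeartbeats 200000 in
/-- Fix a prime `p` and `n ≥ 2`.  In `G = GL_n(ℚ_p)` let `B` be the invertible upper triangular
matrices, `N` the upper triangular unipotent matrices, `N₀ = N ∩ GL_n(ℤ_p)`, `w₀` the
permutation matrix of `i ↦ n+1-i`, and `w` any permutation matrix.  Then
`w₀⁻¹w⁻¹N₀wB = (N₀w₀B) ∩ (w₀⁻¹w⁻¹NwB) = (N₀ ∩ w₀⁻¹w⁻¹N₀ww₀)·w₀·B` as subsets of `G`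
(products being pointwise products of subsets). -/
theorem stmt4 (p : ℕ) [Fact p.Prime] (n : ℕ) (hn : 2 ≤ n)
    (w w₀ : GL (Fin n) ℚ_[p]) (σ : Equiv.Perm (Fin n))
    (hw : ∀ i j : Fin n, (w : Matrix (Fin n) (Fin n) ℚ_[p]) i j = if i = σ j then 1 else 0)
    (hw₀ : ∀ i j : Fin n,
      (w₀ : Matrix (Fin n) (Fin n) ℚ_[p]) i j = if i = Fin.rev j then 1 else 0)
    (B N N₀ : Set (GL (Fin n) ℚ_[p]))
    (hB : B = {g : GL (Fin n) ℚ_[p] |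
      ∀ i j : Fin n, j < i → (g : Matrix (Fin n) (Fin n) ℚ_[p]) i j = 0})
    (hN : N = {g : GL (Fin n) ℚ_[p] |
      (∀ i j : Fin n, j < i → (g : Matrix (Fin n) (Fin n) ℚ_[p]) i j = 0) ∧
      ∀ i : Fin n, (g : Matrix (Fin n) (Fin n) ℚ_[p]) i i = 1})
    (hN₀ : N₀ = N ∩ {g : GL (Fin n) ℚ_[p] |
      ∀ i j : Fin n, ‖(g : Matrix (Fin n) (Fin n) ℚ_[p]) i j‖ ≤ 1}) :
    {w₀⁻¹ * w⁻¹} * (N₀ * {w} * B) =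
        (N₀ * {w₀} * B) ∩ ({w₀⁻¹ * w⁻¹} * (N * {w} * B)) ∧
    {w₀⁻¹ * w⁻¹} * (N₀ * {w} * B) =
        (N₀ ∩ ((fun x => (w₀⁻¹ * w⁻¹) * x * (w * w₀)) '' N₀)) * {w₀} * B := by
  have hww : w₀ * w₀ = 1 := by
    ext i j
    rw [Units.val_mul, Matrix.mul_apply]
    simp [hw₀, Matrix.one_apply]
  have hq : ∀ i j : Fin n, ((w * w₀ : GL (Fin n) ℚ_[p]) : Matrix (Fin n) (Fin n) ℚ_[p]) i j =
      if i = (Fin.revPerm.trans σ) j then 1 else 0 := by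
    intro i j
    rw [Units.val_mul, Matrix.mul_apply]
    simp [hw, hw₀]
  have hinv : w₀⁻¹ = w₀ := inv_eq_of_mul_eq_one_right hww
  have key := fun S => lemA (K := ℚ_[p]) S w w₀ σ hw hw₀ hq hww
  have alg : ∀ h b : GL (Fin n) ℚ_[p],
      w₀⁻¹ * w⁻¹ * h * (w * w₀) * w₀ * b = w₀⁻¹ * w⁻¹ * (h * w * b) := by
    intro h b
    have : w₀⁻¹ * w⁻¹ * h * (w * w₀) * w₀ * b = w₀⁻¹ * w⁻¹ * h * w * (w₀ * w₀) * b := by group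
    rw [this, hww]; group
  subst hN₀ hN hB
  refine ⟨Set.Subset.antisymm ?_ ?_, Set.Subset.antisymm ?_ ?_⟩
  · rintro x ⟨_, rfl, _, ⟨_, ⟨g, ⟨⟨g0, g1⟩, gS⟩, _, rfl, rfl⟩, b, hb, rfl⟩, rfl⟩
    refine ⟨?_, ⟨_, rfl, _, ⟨_, ⟨g, ⟨g0, g1⟩, _, rfl, rfl⟩, b, hb, rfl⟩, rfl⟩⟩
    obtain ⟨a, h, b1, a0, a1, aS, h0, h1, b10, -, -, e⟩ := key (PadicInt.subring p) g g0 g1 gS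
    refine ⟨_, ⟨a, ⟨⟨a0, a1⟩, aS⟩, _, rfl, rfl⟩, b1 * b, upper_mul _ _ b10 hb, ?_⟩
    simp only [← mul_assoc] at e ⊢
    rw [e]
  · rintro x ⟨⟨_, ⟨a', ⟨⟨a0', a1'⟩, aS'⟩, w₁, hw₁, rfl⟩, b', hb', rfl⟩,
      ⟨_, rfl, _, ⟨_, ⟨g, ⟨g0, g1⟩, _, rfl, rfl⟩, b, hb, rfl⟩, hx⟩⟩
    obtain rfl : w₀ = w₁ := (Set.mem_singleton_iff.mp hw₁).symm
    obtain ⟨a, h, b1, a0, a1, aS, h0, h1, b10, ea, hh, e⟩ := key ⊤ g g0 g1 (fun _ _ => trivial)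
    have e2 : a' * w₀ * b' = a * w₀ * (b1 * b) := by
      rw [← mul_assoc, ← e]
      simp only [← mul_assoc] at hx ⊢
      exact hx.symm
    have e3 := lemU w₀ hw₀ hww a' a b' (b1 * b) a0' a1' a0 a1 hb' (upper_mul _ _ b10 hb) e2
    subst e3
    refine ⟨_, rfl, _, ⟨_, ⟨h, ⟨⟨h0, h1⟩, fun i j => ?_⟩, _, rfl, rfl⟩, b', hb', rfl⟩, ?_⟩
    · rw [hh]; exact aS' _ _
    · exact (alg h b').symm.trans (by rw [← ea])
  · rintro x ⟨_, rfl, _, ⟨_, ⟨g, ⟨⟨g0, g1⟩, gS⟩, _, rfl, rfl⟩, b, hb, rfl⟩, rfl⟩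
    obtain ⟨a, h, b1, a0, a1, aS, h0, h1, b10, ea, hh, e⟩ := key (PadicInt.subring p) g g0 g1 gS
    refine ⟨_, ⟨a, ⟨⟨⟨a0, a1⟩, aS⟩, ⟨h, ⟨⟨h0, h1⟩, fun i j => ?_⟩, ea.symm⟩⟩, _, rfl, rfl⟩,
      b1 * b, upper_mul _ _ b10 hb, ?_⟩
    · rw [hh]; exact aS _ _
    · simp only [← mul_assoc] at e ⊢
      rw [e]
  · rintro x ⟨_, ⟨_, ⟨_, ⟨h, hh, rfl⟩⟩, _, rfl, rfl⟩, b, hb, rfl⟩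
    exact ⟨_, rfl, _, ⟨_, ⟨h, hh, _, rfl, rfl⟩, b, hb, rfl⟩, (alg h b).symm⟩
end

section
/- Fix a prime p and an integer n ≥ 2. G := GL_n(ℚ_p) is the group of invertible n×n matrices over ℚ_p. B ≤ G is the subgroup of invertible upper triangular matrices, N the group of upper triangular unipotent matrices (1 on the diagonal, 0 below), N₀ := N ∩ GL_n(ℤ_p), T the group of invertible diagonal matrices, T₊ := {t ∈ T : tN₀t⁻¹ ⊆ N₀}, and w₀ the permutation matrix of the involution i ↦ n+1−i. For a permutation matrix w put N_{0,w₀⁻¹w⁻¹} := N₀ ∩ w₀⁻¹w⁻¹N₀ww₀ and U_w := (N₀w₀B) ∖ (w₀⁻¹w⁻¹NwB), a right B-stable subset of G. Then for every u ∈ N_{0,w₀⁻¹w⁻¹} and every t ∈ T₊, setting b := ut, one has U_w ∩ b·(N₀w₀B) = b·U_w (as subsets of G). -/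
open scoped Pointwise

section helpers
variable {K : Type*} [Field K] {n : ℕ}

theorem h_perm_inv (P : GL (Fin n) K) (σ : Equiv.Perm (Fin n))
    (hP : ∀ i j : Fin n, (P : Matrix (Fin n) (Fin n) K) i j = if i = σ j then 1 else 0)
    (i j : Fin n) :
    ((P⁻¹ : GL (Fin n) K) : Matrix (Fin n) (Fin n) K) i j = if i = σ.symm j then 1 else 0 := by
  have : ((P⁻¹ : GL (Fin n) K) : Matrix (Fin n) (Fin n) K)
      = Matrix.of (fun i j => if i = σ.symm j then (1 : K) else 0) := by
    rw [Matrix.coe_units_inv]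
    apply Matrix.inv_eq_left_inv
    ext i j
    simp only [Matrix.mul_apply, Matrix.of_apply, hP, Matrix.one_apply]
    simp
  rw [this]
  rfl

theorem h_perm_conj (P t : GL (Fin n) K) (σ : Equiv.Perm (Fin n))
    (hP : ∀ i j : Fin n, (P : Matrix (Fin n) (Fin n) K) i j = if i = σ j then 1 else 0)
    (ht : ∀ i j : Fin n, i ≠ j → (t : Matrix (Fin n) (Fin n) K) i j = 0)
    (i j : Fin n) (hij : i ≠ j) :
    ((P * t * P⁻¹ : GL (Fin n) K) : Matrix (Fin n) (Fin n) K) i j = 0 := by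
  rw [Units.val_mul, Units.val_mul, Matrix.mul_apply]
  apply Finset.sum_eq_zero
  intro k _
  rw [h_perm_inv P σ hP, Matrix.mul_apply]
  split_ifs with hk
  · rw [mul_one]
    apply Finset.sum_eq_zero
    intro l _
    rw [hP]
    split_ifs with hl
    · rw [one_mul]
      apply ht
      rintro rfl
      apply hij
      rw [hl, hk]; simp
    · simp
  · simp

theorem h_perm_conj' (P t : GL (Fin n) K) (σ : Equiv.Perm (Fin n))
    (hP : ∀ i j : Fin n, (P : Matrix (Fin n) (Fin n) K) i j = if i = σ j then 1 else 0)
    (ht : ∀ i j : Fin n, i ≠ j → (t : Matrix (Fin n) (Fin n) K) i j = 0)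
    (i j : Fin n) (hij : i ≠ j) :
    ((P⁻¹ * t * P : GL (Fin n) K) : Matrix (Fin n) (Fin n) K) i j = 0 := by
  have := h_perm_conj P⁻¹ t σ.symm (h_perm_inv P σ hP) ht i j hij
  rwa [inv_inv] at this

theorem h_tri_mul (a b : GL (Fin n) K)
    (ha : ∀ i j : Fin n, j < i → (a : Matrix (Fin n) (Fin n) K) i j = 0)
    (hb : ∀ i j : Fin n, j < i → (b : Matrix (Fin n) (Fin n) K) i j = 0)
    (i j : Fin n) (hij : j < i) :
    ((a * b : GL (Fin n) K) : Matrix (Fin n) (Fin n) K) i j = 0 := by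
  rw [Units.val_mul, Matrix.mul_apply]
  apply Finset.sum_eq_zero
  intro k _
  rcases lt_or_ge k i with h | h
  · rw [ha _ _ h, zero_mul]
  · rw [hb _ _ (lt_of_lt_of_le hij h), mul_zero]

theorem h_tri_diag (a b : GL (Fin n) K)
    (ha : ∀ i j : Fin n, j < i → (a : Matrix (Fin n) (Fin n) K) i j = 0)
    (hb : ∀ i j : Fin n, j < i → (b : Matrix (Fin n) (Fin n) K) i j = 0)
    (i : Fin n) :
    ((a * b : GL (Fin n) K) : Matrix (Fin n) (Fin n) K) i i =
      (a : Matrix (Fin n) (Fin n) K) i i * (b : Matrix (Fin n) (Fin n) K) i i := by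
  rw [Units.val_mul, Matrix.mul_apply]
  apply Finset.sum_eq_single i
  · intro k _ hk
    rcases lt_or_gt_of_ne hk with h | h
    · rw [ha _ _ h, zero_mul]
    · rw [hb _ _ h, mul_zero]
  · simp

theorem h_tri_inv (a : GL (Fin n) K)
    (ha : ∀ i j : Fin n, j < i → (a : Matrix (Fin n) (Fin n) K) i j = 0)
    (i j : Fin n) (hij : j < i) :
    ((a⁻¹ : GL (Fin n) K) : Matrix (Fin n) (Fin n) K) i j = 0 := by
  rw [Matrix.coe_units_inv]
  haveI : Invertible (a : Matrix (Fin n) (Fin n) K) := a.invertible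
  have h : Matrix.BlockTriangular (a : Matrix (Fin n) (Fin n) K) id := fun i j h => ha i j h
  exact Matrix.blockTriangular_inv_of_blockTriangular h hij

theorem h_diag_inv (a : GL (Fin n) K)
    (ha : ∀ i j : Fin n, i ≠ j → (a : Matrix (Fin n) (Fin n) K) i j = 0)
    (i j : Fin n) (hij : i ≠ j) :
    ((a⁻¹ : GL (Fin n) K) : Matrix (Fin n) (Fin n) K) i j = 0 := by
  have h : (((a * a⁻¹ : GL (Fin n) K)) : Matrix (Fin n) (Fin n) K) i j = 0 := by
    rw [mul_inv_cancel, Units.val_one, Matrix.one_apply_ne hij]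
  have h2 : (((a * a⁻¹ : GL (Fin n) K)) : Matrix (Fin n) (Fin n) K) i i = 1 := by
    rw [mul_inv_cancel, Units.val_one, Matrix.one_apply_eq]
  have key : ∀ j, (((a * a⁻¹ : GL (Fin n) K)) : Matrix (Fin n) (Fin n) K) i j =
      (a : Matrix (Fin n) (Fin n) K) i i * ((a⁻¹ : GL (Fin n) K) : Matrix (Fin n) (Fin n) K) i j := by
    intro j
    rw [Units.val_mul, Matrix.mul_apply]
    apply Finset.sum_eq_single i
    · intro k _ hk
      rw [ha _ _ hk.symm, zero_mul]
    · simp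
  rw [key] at h h2
  rcases mul_eq_zero.1 h with h' | h'
  · rw [h', zero_mul] at h2
    exact absurd h2 zero_ne_one
  · exact h'

end helpers

theorem h_group {G : Type*} [Group G] (w w₀ : G) (B N N₀ T Uw : Set G)
    (hBm : ∀ a ∈ B, ∀ b ∈ B, a * b ∈ B)
    (hNm : ∀ a ∈ N, ∀ b ∈ N, a * b ∈ N)
    (hNi : ∀ a ∈ N, a⁻¹ ∈ N)
    (hN0N : N₀ ⊆ N)
    (hN0m : ∀ a ∈ N₀, ∀ b ∈ N₀, a * b ∈ N₀)
    (hTB : T ⊆ B)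
    (hTi : ∀ a ∈ T, a⁻¹ ∈ T)
    (hTN : ∀ t ∈ T, ∀ x ∈ N, t * x * t⁻¹ ∈ N)
    (hTw : ∀ t ∈ T, w * t * w⁻¹ ∈ T)
    (hTw' : ∀ t ∈ T, w⁻¹ * t * w ∈ T)
    (hTw0 : ∀ t ∈ T, w₀ * t * w₀⁻¹ ∈ T)
    (hTw0' : ∀ t ∈ T, w₀⁻¹ * t * w₀ ∈ T)
    (hUw : Uw = (N₀ * {w₀} * B) \ ({w₀⁻¹ * w⁻¹} * (N * {w} * B))) :
    ∀ u ∈ N₀ ∩ ((fun x => (w₀⁻¹ * w⁻¹) * x * (w * w₀)) '' N₀),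
      ∀ t ∈ {t ∈ T | ∀ x ∈ N₀, t * x * t⁻¹ ∈ N₀},
        Uw ∩ ({u * t} * (N₀ * {w₀} * B)) = {u * t} * Uw := by
  rintro u ⟨hu, x, hx, hxu⟩ t ⟨ht, htN⟩
  have hxu : w₀⁻¹ * w⁻¹ * x * (w * w₀) = u := hxu
  have memC : ∀ g, g ∈ N₀ * {w₀} * B ↔ ∃ m ∈ N₀, ∃ b ∈ B, g = m * w₀ * b := by
    intro g
    simp only [Set.mem_mul, Set.mem_singleton_iff]
    constructor
    · rintro ⟨_, ⟨m, hm, _, rfl, rfl⟩, b, hb, rfl⟩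
      exact ⟨m, hm, b, hb, rfl⟩
    · rintro ⟨m, hm, b, hb, rfl⟩
      exact ⟨_, ⟨m, hm, _, rfl, rfl⟩, b, hb, rfl⟩
  have memD : ∀ g, g ∈ ({w₀⁻¹ * w⁻¹} * (N * {w} * B) : Set G) ↔
      ∃ m ∈ N, ∃ b ∈ B, g = w₀⁻¹ * w⁻¹ * (m * w * b) := by
    intro g
    simp only [Set.mem_mul, Set.mem_singleton_iff]
    constructor
    · rintro ⟨_, rfl, _, ⟨_, ⟨m, hm, _, rfl, rfl⟩, b, hb, rfl⟩, rfl⟩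
      exact ⟨m, hm, b, hb, rfl⟩
    · rintro ⟨m, hm, b, hb, rfl⟩
      exact ⟨_, rfl, _, ⟨_, ⟨m, hm, _, rfl, rfl⟩, b, hb, rfl⟩, rfl⟩
  have memS : ∀ (a g : G) (S : Set G), g ∈ ({a} * S : Set G) ↔ ∃ s ∈ S, g = a * s := by
    intro a g S
    simp only [Set.mem_mul, Set.mem_singleton_iff]
    constructor
    · rintro ⟨_, rfl, s, hs, rfl⟩
      exact ⟨s, hs, rfl⟩
    · rintro ⟨s, hs, rfl⟩
      exact ⟨_, rfl, s, hs, rfl⟩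
  have hC : ∀ g ∈ N₀ * {w₀} * B, u * t * g ∈ N₀ * {w₀} * B := by
    intro g hg
    obtain ⟨m, hm, b, hb, rfl⟩ := (memC g).1 hg
    refine (memC _).2 ⟨u * (t * m * t⁻¹), hN0m _ hu _ (htN m hm), (w₀⁻¹ * t * w₀) * b,
      hBm _ (hTB (hTw0' t ht)) _ hb, ?_⟩
    group
  -- D is stable under T and under conjugates of N
  have hDT : ∀ s ∈ T, ∀ g ∈ ({w₀⁻¹ * w⁻¹} * (N * {w} * B) : Set G),
      s * g ∈ ({w₀⁻¹ * w⁻¹} * (N * {w} * B) : Set G) := by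
    intro s hs g hg
    obtain ⟨m, hm, b, hb, rfl⟩ := (memD g).1 hg
    have h1 := hTw0 s hs
    have h2 := hTw _ h1
    refine (memD _).2 ⟨_, hTN _ h2 m hm, _, hBm _ (hTB (hTw' _ h2)) _ hb, ?_⟩
    group
  have hDN : ∀ y ∈ N, ∀ g ∈ ({w₀⁻¹ * w⁻¹} * (N * {w} * B) : Set G),
      (w₀⁻¹ * w⁻¹ * y * (w * w₀)) * g ∈ ({w₀⁻¹ * w⁻¹} * (N * {w} * B) : Set G) := by
    intro y hy g hg
    obtain ⟨m, hm, b, hb, rfl⟩ := (memD g).1 hg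
    refine (memD _).2 ⟨_, hNm y hy m hm, b, hb, ?_⟩
    group
  have hD : ∀ g, u * t * g ∈ ({w₀⁻¹ * w⁻¹} * (N * {w} * B) : Set G) ↔
      g ∈ ({w₀⁻¹ * w⁻¹} * (N * {w} * B) : Set G) := by
    intro g
    constructor
    · intro h
      have h1 := hDT _ (hTi t ht) _ (hDN _ (hNi x (hN0N hx)) _ h)
      convert h1 using 1
      rw [← hxu]
      group
    · intro h
      have h1 := hDN _ (hN0N hx) _ (hDT _ ht _ h)
      rw [hxu] at h1
      rwa [mul_assoc u t g]
  ext g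
  rw [Set.mem_inter_iff, memS, memS, hUw]
  constructor
  · rintro ⟨⟨h1, h2⟩, s, hs, rfl⟩
    exact ⟨s, ⟨hs, fun h => h2 ((hD s).2 h)⟩, rfl⟩
  · rintro ⟨s, ⟨hs, hs2⟩, rfl⟩
    exact ⟨⟨hC s hs, fun h => hs2 ((hD s).1 h)⟩, s, hs, rfl⟩

set_option maxHeartbeats 1000000 in
set_option synthInstance.maxHeartbeats 200000 in
/-- Fix a prime `p` and `n ≥ 2`.  In `G = GL_n(ℚ_p)` let `B` be the invertible upper triangular
matrices, `N` the upper triangular unipotent matrices, `N₀ = N ∩ GL_n(ℤ_p)`, `T` the invertible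
diagonal matrices, `T₊ = {t ∈ T : tN₀t⁻¹ ⊆ N₀}`, `w₀` the permutation matrix of `i ↦ n+1-i`
and `w` any permutation matrix.  With `N_{0,w₀⁻¹w⁻¹} = N₀ ∩ w₀⁻¹w⁻¹N₀ww₀` and
`U_w = (N₀w₀B) ∖ (w₀⁻¹w⁻¹NwB)`, for every `u ∈ N_{0,w₀⁻¹w⁻¹}` and `t ∈ T₊`, setting
`b = u*t`, one has `U_w ∩ b·(N₀w₀B) = b·U_w` as subsets of `G`. -/
theorem stmt5 (p : ℕ) [Fact p.Prime] (n : ℕ) (hn : 2 ≤ n)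
    (w w₀ : GL (Fin n) ℚ_[p]) (σ : Equiv.Perm (Fin n))
    (hw : ∀ i j : Fin n, (w : Matrix (Fin n) (Fin n) ℚ_[p]) i j = if i = σ j then 1 else 0)
    (hw₀ : ∀ i j : Fin n,
      (w₀ : Matrix (Fin n) (Fin n) ℚ_[p]) i j = if i = Fin.rev j then 1 else 0)
    (B N N₀ T : Set (GL (Fin n) ℚ_[p]))
    (hB : B = {g : GL (Fin n) ℚ_[p] |
      ∀ i j : Fin n, j < i → (g : Matrix (Fin n) (Fin n) ℚ_[p]) i j = 0})
    (hN : N = {g : GL (Fin n) ℚ_[p] |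
      (∀ i j : Fin n, j < i → (g : Matrix (Fin n) (Fin n) ℚ_[p]) i j = 0) ∧
      ∀ i : Fin n, (g : Matrix (Fin n) (Fin n) ℚ_[p]) i i = 1})
    (hN₀ : N₀ = N ∩ {g : GL (Fin n) ℚ_[p] |
      ∀ i j : Fin n, ‖(g : Matrix (Fin n) (Fin n) ℚ_[p]) i j‖ ≤ 1})
    (hT : T = {g : GL (Fin n) ℚ_[p] |
      ∀ i j : Fin n, i ≠ j → (g : Matrix (Fin n) (Fin n) ℚ_[p]) i j = 0})
    (Uw : Set (GL (Fin n) ℚ_[p]))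
    (hUw : Uw = (N₀ * {w₀} * B) \ ({w₀⁻¹ * w⁻¹} * (N * {w} * B))) :
    ∀ u ∈ N₀ ∩ ((fun x => (w₀⁻¹ * w⁻¹) * x * (w * w₀)) '' N₀),
      ∀ t ∈ {t ∈ T | ∀ x ∈ N₀, t * x * t⁻¹ ∈ N₀},
        Uw ∩ ({u * t} * (N₀ * {w₀} * B)) = {u * t} * Uw := by
  have hTB : ∀ t ∈ T, ∀ i j : Fin n, j < i → (t : Matrix (Fin n) (Fin n) ℚ_[p]) i j = 0 := by
    intro t ht i j hij
    rw [hT] at ht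
    exact ht i j hij.ne'
  have hTi : ∀ a ∈ T, a⁻¹ ∈ T := by
    intro a ha
    rw [hT] at ha ⊢
    exact h_diag_inv a ha
  have hNm : ∀ a ∈ N, ∀ b ∈ N, a * b ∈ N := by
    intro a ha b hb
    rw [hN] at ha hb ⊢
    refine ⟨h_tri_mul a b ha.1 hb.1, fun i => ?_⟩
    rw [h_tri_diag a b ha.1 hb.1, ha.2, hb.2, one_mul]
  have hw₀' : ∀ i j : Fin n,
      (w₀ : Matrix (Fin n) (Fin n) ℚ_[p]) i j = if i = Fin.revPerm j then 1 else 0 := hw₀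
  refine h_group w w₀ B N N₀ T Uw ?_ hNm ?_ ?_ ?_ ?_ hTi ?_ ?_ ?_ ?_ ?_ hUw
  · intro a ha b hb
    rw [hB] at ha hb ⊢
    exact h_tri_mul a b ha hb
  · intro a ha
    rw [hN] at ha ⊢
    have h := h_tri_inv a ha.1
    refine ⟨h, fun i => ?_⟩
    have h2 := h_tri_diag a a⁻¹ ha.1 h i
    rw [mul_inv_cancel, Units.val_one, Matrix.one_apply_eq, ha.2, one_mul] at h2
    exact h2.symm
  · rw [hN₀]
    exact Set.inter_subset_left
  · intro a ha b hb
    rw [hN₀] at ha hb ⊢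
    refine ⟨hNm a ha.1 b hb.1, fun i j => ?_⟩
    rw [Units.val_mul, Matrix.mul_apply]
    apply IsUltrametricDist.norm_sum_le_of_forall_le_of_nonneg zero_le_one
    intro k _
    rw [norm_mul]
    exact mul_le_one₀ (ha.2 i k) (norm_nonneg _) (hb.2 k j)
  · intro t ht
    rw [hB]
    exact hTB t ht
  · intro t ht x hx
    have h1 := hTB t ht
    have h2 := hTB _ (hTi t ht)
    rw [hN] at hx ⊢
    have h3 := h_tri_mul t x h1 hx.1
    refine ⟨h_tri_mul _ _ h3 h2, fun i => ?_⟩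
    rw [h_tri_diag _ _ h3 h2, h_tri_diag _ _ h1 hx.1, hx.2, mul_one, ← h_tri_diag _ _ h1 h2,
      mul_inv_cancel, Units.val_one, Matrix.one_apply_eq]
  · intro t ht
    rw [hT] at ht ⊢
    exact h_perm_conj w t σ hw ht
  · intro t ht
    rw [hT] at ht ⊢
    exact h_perm_conj' w t σ hw ht
  · intro t ht
    rw [hT] at ht ⊢
    exact h_perm_conj w₀ t _ hw₀' ht
  · intro t ht
    rw [hT] at ht ⊢
    exact h_perm_conj' w₀ t _ hw₀' ht
end

section
/- Fix a prime p and an integer n ≥ 2. Let N₀ be the group of upper triangular unipotent n×n matrices with entries in ℤ_p, and H_{Δ,0} := {u ∈ N₀ : u_{i,i+1} = 0 for all 1 ≤ i ≤ n−1} (a subgroup of N₀), with the topology induced by the p-adic topology on matrix entries. Fix j with 1 ≤ j ≤ n−1, for 1 ≤ i ≤ n−1 let t_i := diag(p,…,p,1,…,1) be the diagonal matrix whose first i diagonal entries equal p and whose remaining entries equal 1, and set s := ∏_{i ∈ {1,…,n−1}, i ≠ j} t_i (so s = diag(p^{c_1},…,p^{c_n}) with c_m = (n−m) − 1 if m ≤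 j and c_m = n−m if m > j). Then the conjugate subgroups s^k H_{Δ,0} s^{−k}, k ≥ 0, form a fundamental system of open neighbourhoods of the identity in H_{Δ,0}: each s^k H_{Δ,0} s^{−k} is an open subgroup of H_{Δ,0}, and every neighbourhood of the identity in H_{Δ,0} contains s^k H_{Δ,0} s^{−k} for all sufficiently large k. -/
def HSet (p : ℕ) [Fact p.Prime] (n : ℕ) (w : Fin n → ℝ) : Set (Matrix (Fin n) (Fin n) ℚ_[p]) :=
  {u | (∀ i l : Fin n, l < i → u i l = 0) ∧ (∀ i : Fin n, u i i = 1) ∧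
      (∀ i l : Fin n, ‖u i l‖ * w l ≤ w i) ∧
      ∀ i l : Fin n, (l : ℕ) = (i : ℕ) + 1 → u i l = 0}

lemma HSet_mul (p : ℕ) [Fact p.Prime] (n : ℕ) (w : Fin n → ℝ) (hw : ∀ i, 0 < w i)
    (x y : Matrix (Fin n) (Fin n) ℚ_[p]) (hx : x ∈ HSet p n w) (hy : y ∈ HSet p n w) :
    x * y ∈ HSet p n w := by
  obtain ⟨x1, x2, x3, x4⟩ := hx
  obtain ⟨y1, y2, y3, y4⟩ := hy
  refine ⟨fun i l h => ?_, fun i => ?_, fun i l => ?_, fun i l h => ?_⟩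
  · rw [Matrix.mul_apply]
    refine Finset.sum_eq_zero fun m _ => ?_
    rcases lt_or_ge m i with h' | h'
    · rw [x1 _ _ h', zero_mul]
    · rw [y1 _ _ (lt_of_lt_of_le h h'), mul_zero]
  · rw [Matrix.mul_apply, Finset.sum_eq_single i, x2, y2, one_mul]
    · intro m _ hm
      rcases lt_or_gt_of_ne hm with h' | h'
      · rw [x1 _ _ h', zero_mul]
      · rw [y1 _ _ h', mul_zero]
    · simp
  · rw [← le_div_iff₀ (hw l), Matrix.mul_apply]
    refine IsUltrametricDist.norm_sum_le_of_forall_le_of_nonneg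
      (div_nonneg (hw i).le (hw l).le) fun m _ => ?_
    rw [le_div_iff₀ (hw l), norm_mul, mul_assoc]
    exact (mul_le_mul_of_nonneg_left (y3 m l) (norm_nonneg _)).trans (x3 i m)
  · rw [Matrix.mul_apply]
    refine Finset.sum_eq_zero fun m _ => ?_
    rcases lt_trichotomy m i with h' | h' | h'
    · rw [x1 _ _ h', zero_mul]
    · rw [h', y4 _ _ h, mul_zero]
    · rcases (show (m : ℕ) = i + 1 ∨ l < m by
        rw [Fin.lt_def] at *; omega) with h'' | h''
      · rw [x4 _ _ h'', zero_mul]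
      · rw [y1 _ _ h'', mul_zero]

lemma HSet_inv (p : ℕ) [Fact p.Prime] (n : ℕ)
    (x : Matrix (Fin n) (Fin n) ℚ_[p]) (hx : x ∈ HSet p n 1) : 
    x⁻¹ ∈ HSet p n 1 ∧ x * x⁻¹ = 1 := by
  obtain ⟨x1, x2, x3, x4⟩ := hx
  have ht : x.BlockTriangular id := fun i l h => x1 i l h
  have hdet : x.det = 1 := by
    rw [Matrix.det_of_upperTriangular ht]; simp [x2]
  have hmul : x * x⁻¹ = 1 := Matrix.mul_nonsing_inv x (by simp [hdet])
  letI : Invertible x := Matrix.invertibleOfIsUnitDet x (by simp [hdet])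
  have y1 : ∀ i l : Fin n, l < i → x⁻¹ i l = 0 := fun i l h =>
    Matrix.blockTriangular_inv_of_blockTriangular ht h
  have y2 : ∀ i : Fin n, x⁻¹ i i = 1 := by
    intro i
    have := congrFun (congrFun hmul i) i
    rw [Matrix.mul_apply, Finset.sum_eq_single i, x2, one_mul, Matrix.one_apply_eq] at this
    · exact this
    · intro m _ hm
      rcases lt_or_gt_of_ne hm with h' | h'
      · rw [x1 _ _ h', zero_mul]
      · rw [y1 _ _ h', mul_zero]
    · simp
  refine ⟨⟨y1, y2, fun i l => ?_, fun i l h => ?_⟩, hmul⟩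
  · let X : Matrix (Fin n) (Fin n) ℤ_[p] := fun i l => ⟨x i l, by simpa using x3 i l⟩
    have hX : x = PadicInt.Coe.ringHom.mapMatrix X := by ext i l; rfl
    have : x⁻¹ = PadicInt.Coe.ringHom.mapMatrix X.adjugate := by
      rw [RingHom.map_adjugate, ← hX, Matrix.inv_def, hdet]; simp
    rw [this]
    have h := PadicInt.norm_le_one (X.adjugate i l)
    rw [PadicInt.norm_def] at h
    simp only [Pi.one_apply, mul_one]
    exact h
  · have := congrFun (congrFun hmul i) l
    have hil : i ≠ l := by intro h'; subst h'; omega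
    rw [Matrix.mul_apply, Finset.sum_eq_single i, x2, one_mul, Matrix.one_apply_ne hil] at this
    · exact this
    · intro m _ hm
      rcases lt_or_gt_of_ne hm with h' | h'
      · rw [x1 _ _ h', zero_mul]
      · rcases (show (m : ℕ) = i + 1 ∨ l < m by
          rw [Fin.lt_def] at *; omega) with h'' | h''
        · rw [x4 _ _ h'', zero_mul]
        · rw [y1 _ _ h'', mul_zero]
    · simp


/-- Fix a prime `p` and `n ≥ 2`.  Let `H = H_{Δ,0}` be the group of upper triangular unipotent
`n × n` matrices with entries in `ℤ_p` (realized inside the `ℚ_p`-matrices via the norm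
condition `‖·‖ ≤ 1`) whose superdiagonal entries vanish, with the topology induced by the
`p`-adic topology on matrix entries.  Fix `1 ≤ j ≤ n-1` and let
`s = diag(p^{c_1}, …, p^{c_n})` with `c_m = (n-m)-1` if `m ≤ j` and `c_m = n-m` otherwise
(`1`-indexed), i.e. `s = ∏_{i ≠ j} t_i`.  Then the conjugates `S k = s^k H s^{-k}` form a
fundamental system of open neighbourhoods of `1` in `H`: each `S k` is an open subgroup of `H`
(it is contained in `H`, contains `1`, is closed under multiplication and inversion, and is a
neighbourhood within `H` of each of its points), and every neighbourhood of `1` in `H` contains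
`S k` for all sufficiently large `k`. -/
theorem stmt6 (p : ℕ) [Fact p.Prime] (n : ℕ) (hn : 2 ≤ n)
    (j : ℕ) (hj1 : 1 ≤ j) (hj2 : j ≤ n - 1)
    (c : Fin n → ℕ)
    (hc : ∀ m : Fin n, c m =
      if (m : ℕ) + 1 ≤ j then n - ((m : ℕ) + 1) - 1 else n - ((m : ℕ) + 1))
    (s sInv : Matrix (Fin n) (Fin n) ℚ_[p])
    (hs : s = Matrix.diagonal fun m => (p : ℚ_[p]) ^ c m)
    (hsInv : sInv = Matrix.diagonal fun m => ((p : ℚ_[p]) ^ c m)⁻¹)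
    (H : Set (Matrix (Fin n) (Fin n) ℚ_[p]))
    (hH : H = {u | (∀ i l : Fin n, l < i → u i l = 0) ∧ (∀ i : Fin n, u i i = 1) ∧
      (∀ i l : Fin n, ‖u i l‖ ≤ 1) ∧
      ∀ i l : Fin n, (l : ℕ) = (i : ℕ) + 1 → u i l = 0})
    (S : ℕ → Set (Matrix (Fin n) (Fin n) ℚ_[p]))
    (hS : ∀ k : ℕ, S k = (fun x => s ^ k * x * sInv ^ k) '' H) :
    (∀ k : ℕ, S k ⊆ H) ∧
    (∀ k : ℕ, (1 : Matrix (Fin n) (Fin n) ℚ_[p]) ∈ S k) ∧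
    (∀ k : ℕ, ∀ x ∈ S k, ∀ y ∈ S k, x * y ∈ S k) ∧
    (∀ k : ℕ, ∀ x ∈ S k, x⁻¹ ∈ S k) ∧
    (∀ k : ℕ, ∀ x ∈ S k, S k ∈ nhdsWithin x H) ∧
    (∀ V ∈ nhdsWithin (1 : Matrix (Fin n) (Fin n) ℚ_[p]) H, ∃ k₀ : ℕ, ∀ k ≥ k₀, S k ⊆ V) := by
  have hp0 : (p : ℚ_[p]) ≠ 0 := by exact_mod_cast (Fact.out : p.Prime).ne_zero
  have hq0 : (0 : ℝ) < ‖(p : ℚ_[p])‖ := norm_pos_iff.mpr hp0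
  have hq1 : ‖(p : ℚ_[p])‖ < 1 := Padic.norm_p_lt_one
  have hH1 : H = HSet p n 1 := by rw [hH]; simp [HSet]
  let w : ℕ → Fin n → ℝ := fun k i => (‖(p : ℚ_[p])‖ ^ c i) ^ k
  have hw : ∀ k i, 0 < w k i := fun k i => by positivity
  have hsk : ∀ k, s ^ k = Matrix.diagonal fun m => ((p : ℚ_[p]) ^ c m) ^ k := by
    intro k; rw [hs, Matrix.diagonal_pow]; rfl
  have hsik : ∀ k, sInv ^ k = Matrix.diagonal fun m => (((p : ℚ_[p]) ^ c m) ^ k)⁻¹ := by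
    intro k; rw [hsInv, Matrix.diagonal_pow]; congr 1; ext m; simp
  have hd0 : ∀ k m, ((p : ℚ_[p]) ^ c m) ^ k ≠ 0 := fun k m => by positivity
  have hss : ∀ k, s ^ k * sInv ^ k = 1 := by
    intro k
    rw [hsk, hsik, Matrix.diagonal_mul_diagonal, ← Matrix.diagonal_one]
    congr 1; ext m; exact mul_inv_cancel₀ (hd0 k m)
  have hss' : ∀ k, sInv ^ k * s ^ k = 1 := by
    intro k
    rw [hsk, hsik, Matrix.diagonal_mul_diagonal, ← Matrix.diagonal_one]
    congr 1; ext m; exact inv_mul_cancel₀ (hd0 k m)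
  have hent : ∀ (k : ℕ) (x : Matrix (Fin n) (Fin n) ℚ_[p]) (i l : Fin n), (s ^ k * x * sInv ^ k) i l =
      ((p : ℚ_[p]) ^ c i) ^ k * x i l * (((p : ℚ_[p]) ^ c l) ^ k)⁻¹ := by
    intro k x i l
    rw [hsk, hsik, Matrix.mul_diagonal, Matrix.diagonal_mul]
  have hent' : ∀ (k : ℕ) (x : Matrix (Fin n) (Fin n) ℚ_[p]) (i l : Fin n), (sInv ^ k * x * s ^ k) i l =
      (((p : ℚ_[p]) ^ c i) ^ k)⁻¹ * x i l * ((p : ℚ_[p]) ^ c l) ^ k := by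
    intro k x i l
    rw [hsk, hsik, Matrix.mul_diagonal, Matrix.diagonal_mul]
  have hSw : ∀ k, S k = HSet p n (w k) := by
    intro k
    rw [hS, hH1]
    ext y
    constructor
    · rintro ⟨x, ⟨x1, x2, x3, x4⟩, rfl⟩
      refine ⟨fun i l h => ?_, fun i => ?_, fun i l => ?_, fun i l h => ?_⟩
      · simp only [hent]; rw [x1 i l h]; simp
      · simp only [hent]; rw [x2 i, mul_one]; exact mul_inv_cancel₀ (hd0 k i)
      · simp only [hent]
        have h3 : ‖x i l‖ ≤ 1 := by simpa using x3 i l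
        have e : ‖((p : ℚ_[p]) ^ c i) ^ k * x i l * (((p : ℚ_[p]) ^ c l) ^ k)⁻¹‖ * w k l
            = w k i * ‖x i l‖ := by
          rw [norm_mul, norm_mul, norm_inv, norm_pow, norm_pow, norm_pow, norm_pow, mul_assoc]
          change w k i * ‖x i l‖ * ((w k l)⁻¹ * w k l) = _
          rw [inv_mul_cancel₀ (hw k l).ne', mul_one]
        rw [e]
        exact mul_le_of_le_one_right (hw k i).le h3
      · simp only [hent]; rw [x4 i l h]; simp
    · rintro ⟨y1, y2, y3, y4⟩
      refine ⟨sInv ^ k * y * s ^ k, ⟨fun i l h => ?_, fun i => ?_, fun i l => ?_, fun i l h => ?_⟩, ?_⟩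
      · rw [hent', y1 i l h]; simp
      · rw [hent', y2 i, mul_one]; exact inv_mul_cancel₀ (hd0 k i)
      · rw [hent', norm_mul, norm_mul, norm_inv, norm_pow, norm_pow, norm_pow, norm_pow]
        change (w k i)⁻¹ * ‖y i l‖ * w k l * 1 ≤ 1
        rw [mul_one, mul_assoc, inv_mul_le_iff₀ (hw k i), mul_one]
        exact y3 i l
      · rw [hent', y4 i l h]; simp
      · change s ^ k * (sInv ^ k * y * s ^ k) * sInv ^ k = y
        calc s ^ k * (sInv ^ k * y * s ^ k) * sInv ^ k
            = (s ^ k * sInv ^ k) * y * (s ^ k * sInv ^ k) := by simp only [mul_assoc]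
          _ = y := by rw [hss]; simp
  have hcle : ∀ i l : Fin n, i ≤ l → c l ≤ c i := by
    intro i l h
    rw [Fin.le_def] at h
    rw [hc, hc]; have := l.2
    split_ifs <;> omega
  have hclt : ∀ i l : Fin n, (i : ℕ) + 2 ≤ l → c l + 1 ≤ c i := by
    intro i l h
    rw [hc, hc]; have := l.2
    split_ifs <;> omega
  have hsub : ∀ k, S k ⊆ H := by
    intro k
    rw [hSw, hH1]
    rintro y ⟨y1, y2, y3, y4⟩
    refine ⟨y1, y2, fun i l => ?_, y4⟩
    rcases lt_or_ge l i with h | h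
    · simp [y1 i l h]
    · have : w k i ≤ w k l :=
        pow_le_pow_left₀ (by positivity) (pow_le_pow_of_le_one hq0.le hq1.le (hcle i l h)) k
      have h2 := (y3 i l).trans this
      simpa using (mul_le_iff_le_one_left (hw k l)).mp h2
  refine ⟨hsub, ?_, ?_, ?_, ?_, ?_⟩
  · intro k
    rw [hSw]
    refine ⟨fun i l h => Matrix.one_apply_ne h.ne', fun i => Matrix.one_apply_eq i, fun i l => ?_,
      fun i l h => Matrix.one_apply_ne fun h' => ?_⟩
    · by_cases h : i = l
      · subst h; simp
      · rw [Matrix.one_apply_ne h]; simpa using (hw k i).le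
    · subst h'; omega
  · intro k x hx y hy
    rw [hSw] at *
    exact HSet_mul p n _ (hw k) x y hx hy
  · intro k x hx
    rw [hS] at *
    obtain ⟨z, hz, rfl⟩ := hx
    rw [hH1] at *
    obtain ⟨h1, h2⟩ := HSet_inv p n z hz
    refine ⟨z⁻¹, h1, ?_⟩
    symm
    apply Matrix.inv_eq_right_inv
    calc s ^ k * z * sInv ^ k * (s ^ k * z⁻¹ * sInv ^ k)
        = s ^ k * (z * ((sInv ^ k * s ^ k) * z⁻¹)) * sInv ^ k := by simp only [mul_assoc]
      _ = 1 := by rw [hss', one_mul, h2, mul_one, hss]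
  · intro k x hx
    have hopen : IsOpen {y : Matrix (Fin n) (Fin n) ℚ_[p] | ∀ i l, ‖y i l‖ * w k l ≤ w k i} := by
      simp only [Set.setOf_forall]
      refine isOpen_iInter_of_finite fun i => isOpen_iInter_of_finite fun l => ?_
      have : {y : Matrix (Fin n) (Fin n) ℚ_[p] | ‖y i l‖ * w k l ≤ w k i} =
          (fun y : Matrix (Fin n) (Fin n) ℚ_[p] => y i l) ⁻¹'
            Metric.closedBall 0 (w k i / w k l) := by
        ext y
        simp [le_div_iff₀ (hw k l)]
      rw [this]
      exact (IsUltrametricDist.isOpen_closedBall _ (div_pos (hw k i) (hw k l)).ne').preimage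
        (continuous_id.matrix_elem i l)
    have hx' := hx
    rw [hSw] at hx'
    rw [mem_nhdsWithin]
    refine ⟨_, hopen, hx'.2.2.1, ?_⟩
    rintro y ⟨hy, hyH⟩
    rw [hH1] at hyH
    rw [hSw]
    exact ⟨hyH.1, hyH.2.1, hy, hyH.2.2.2⟩
  · intro V hV
    rw [mem_nhdsWithin] at hV
    obtain ⟨U, hU, hU1, hUV⟩ := hV
    have hn1 : U ∈ @nhds (Fin n → Fin n → ℚ_[p]) _ (1 : Matrix (Fin n) (Fin n) ℚ_[p]) :=
      hU.mem_nhds hU1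
    obtain ⟨ε, hε, hb⟩ := Metric.mem_nhds_iff.mp hn1
    obtain ⟨k₀, hk₀⟩ := exists_pow_lt_of_lt_one hε hq1
    refine ⟨k₀, fun k hk y hy => hUV ⟨hb ?_, hsub k hy⟩⟩
    rw [hSw] at hy
    obtain ⟨y1, y2, y3, y4⟩ := hy
    refine (dist_pi_lt_iff hε).mpr fun i => (dist_pi_lt_iff hε).mpr fun l => ?_
    change dist (y i l) ((1 : Matrix (Fin n) (Fin n) ℚ_[p]) i l) < ε
    rcases lt_trichotomy l i with h | h | h
    · rw [y1 i l h, Matrix.one_apply_ne h.ne']; simpa using hε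
    · subst h; rw [y2, Matrix.one_apply_eq]; simpa using hε
    · rw [Matrix.one_apply_ne h.ne]
      by_cases h' : (l : ℕ) = i + 1
      · rw [y4 i l h']; simpa using hε
      · rw [dist_zero_right]
        have h2 : (i : ℕ) + 2 ≤ l := by rw [Fin.lt_def] at h; omega
        have h3 : w k i ≤ ‖(p : ℚ_[p])‖ ^ k * w k l := by
          rw [← mul_pow, ← pow_succ']
          exact pow_le_pow_left₀ (by positivity)
            (pow_le_pow_of_le_one hq0.le hq1.le (hclt i l h2)) k
        have h4 : ‖y i l‖ ≤ ‖(p : ℚ_[p])‖ ^ k :=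
          le_of_mul_le_mul_right ((y3 i l).trans h3) (hw k l)
        exact (h4.trans (pow_le_pow_of_le_one hq0.le hq1.le hk)).trans_lt hk₀
end
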